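/- Let α = (α_1,…,α_n), β = (β_1,…,β_n) be tuples of real numbers with β_i > α_i for each i and α_i − β_{i'} ∉ ℤ for all i, i'. Let A_1,…,A_{n_A} be the distinct values among e^{2πiα_i} with multiplicities m_{A_j}, and B_1,…,B_{n_B} the distinct values among e^{2πiβ_i} with multiplicities m_{B_j}; both multiplicity totals equal n. Fix l ∈ ℤ and let V_A = V_{A,m_A,l} and V_B = V_{B,m_B,l} be the corresponding generalized Vandermonde matrices. Then for every pair (j,r) with 0 ≤ r < m_{B_j} and every φ ∈ (−n/2 + l, −n/2 + l + 1), the connection formula holds: lim_{u→0⁺} g_{B_j,r}(u + 2πiφ) = Σ_{(j',r')} (V_B · V_A^{−1})_{(j,r),(j',r')} · lim_{u→0⁻} g_{A_{j'},r'}(u + 2πiφ), where the sum runs over pairs (j',r') with 1 ≤ j' ≤ n_A, 0 ≤ r' < m_{A_{j'}}. Consequently, in the basis of local solutions at 0 the monodromy of the hypergeometric equation around ∞ is given by the matrix (V_A V_B^{−1} D_B^{−1} V_B V_A^{−1})^t, and in the basis of local solutions at ∞ the monodromy around 0 is given by (V_B V_A^{−1} D_A V_A V_B^{−1})^t. -/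

import Mathlib

open Complex Filter Set Finset MeasureTheory
open scoped Real Topology

noncomputable section

/-- The balanced gamma product `𝚪_{α,β}(s)`. -/
def gammaProd {n : ℕ} (α β : Fin n → ℂ) (s : ℂ) : ℂ :=
  (∏ i, (Complex.Gamma (s - α i + 1))⁻¹) * ∏ i, (Complex.Gamma (-s + β i + 1))⁻¹

/-- The local solution `g_{A,r}` of the hypergeometric equation at `0`, in the exponential
coordinate `z = e^w` (defined for `Re w < 0`). -/
def gA {n : ℕ} (α β : Fin n → ℝ) (ν : ℝ) (r : ℕ) (w : ℂ) : ℂ :=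
  ∑' l : ℕ, ((2 * (π : ℂ) * Complex.I) ^ r)⁻¹ *
    iteratedDeriv r
      (fun t : ℂ =>
        gammaProd (fun i => (α i : ℂ)) (fun i => (β i : ℂ)) ((l : ℂ) + t) *
          Complex.exp (((l : ℂ) + t) * w)) (ν : ℂ)

/-- The local solution `g_{B,r}` of the hypergeometric equation at `∞`, in the exponential
coordinate `z = e^w` (defined for `Re w > 0`). -/
def gB {n : ℕ} (α β : Fin n → ℝ) (ν' : ℝ) (r : ℕ) (w : ℂ) : ℂ :=
  ∑' l : ℕ, ((2 * (π : ℂ) * Complex.I) ^ r)⁻¹ *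
    iteratedDeriv r
      (fun t : ℂ =>
        gammaProd (fun i => (α i : ℂ)) (fun i => (β i : ℂ)) (-(l : ℂ) + t) *
          Complex.exp ((-(l : ℂ) + t) * w)) (ν' : ℂ)

/-- The function `h_{α,β}` supported on `(-1/2, 1/2)` (principal branch power). -/
def hfun (α β : ℂ) : ℝ → ℂ := fun φ =>
  if φ ∈ Set.Ioo (-(1 : ℝ) / 2) ((1 : ℝ) / 2) then
    Complex.exp (2 * (π : ℂ) * Complex.I * α * (φ : ℂ)) *
      (1 + Complex.exp (2 * (π : ℂ) * Complex.I * (φ : ℂ))) ^ (β - α) /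
        Complex.Gamma (β - α + 1)
  else 0

/-- Convolution over `ℝ`: `(f ∗ g)(x) = ∫ f(x - y) g(y) dy`. -/
def conv (f g : ℝ → ℂ) : ℝ → ℂ := fun x => ∫ y : ℝ, f (x - y) * g y

/-- The iterated convolution `f₁ ∗ (f₂ ∗ (⋯ ∗ fₙ))` of a list of functions. -/
def convList : List (ℝ → ℂ) → (ℝ → ℂ)
  | [] => fun _ => 0
  | [f] => f
  | f :: g :: rest => conv f (convList (g :: rest))

/-!
The gamma product `𝚪` is absolutely summable along every coset `t + ℤ`, uniformly for bounded
`Re t`, and grows at most like `exp (n π |Im t|)`: this follows from the reflection formula and a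
telescoping bound for `Γ(x + l) / Γ(x + l + c)`. Hence for real `φ` the two-sided sum
`P(t) = ∑ₗ 𝚪(l + t) e^{2πi(l + t)φ}` over `l ∈ ℤ` is an entire function of period `1`, and the
growth bound forces it to be a trigonometric polynomial `∑ₖ cₖ e^{2πi(l₀ - k)t}` with `0 ≤ k < n`
when `φ` lies in `(-n/2 + l₀, -n/2 + l₀ + 1)`.

At `t = ν(A_j)` the function `𝚪(l + t)` vanishes to order `m_{A_j}` for every `l < 0`, so the first
`m_{A_j}` derivatives of `P` there are the boundary values of the `g_{A_j,r}`; at `t = ν'(B_j)` the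
terms with `l > 0` drop out instead, and the derivatives of `P` are the boundary values of the
`g_{B_j,r}`. The two vectors of boundary values are therefore `V_A c` and `V_B c` with the same `c`.
The monodromy at the base point of each family comes from Leibniz's rule applied to the factor
`e^{2πit}` which `w ↦ w + 2πi` produces, and is then conjugated by the connection matrix.
-/

open ProbabilityTheory (beta)

section GammaBounds

lemma norm_sin_le_exp_abs_im (z : ℂ) : ‖Complex.sin z‖ ≤ Real.exp |z.im| := by
  have norm_exp_le (w : ℂ) (hw : w.re ≤ |z.im|) : ‖Complex.exp w‖ ≤ Real.exp |z.im| := by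
    simpa only [Complex.norm_exp, Real.exp_le_exp] using hw
  have h₁ := norm_exp_le (-z * I) (by simpa using le_abs_self z.im)
  have h₂ := norm_exp_le (z * I) (by simpa using neg_le_abs z.im)
  rw [Complex.sin, norm_div, norm_mul, Complex.norm_I, mul_one, Complex.norm_ofNat]
  linarith [norm_sub_le (Complex.exp (-z * I)) (Complex.exp (z * I))]

lemma norm_betaIntegral_le {x : ℝ} {u v : ℂ} (hx : 0 < x) (hxu : x ≤ u.re) (hv : 0 < v.re) :
    ‖Complex.betaIntegral u v‖ ≤ beta x v.re := by
  have norm_integrand {y : ℝ} (hy₀ : 0 < y) (hy₁ : y < 1) :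
      ‖(y : ℂ) ^ (u - 1) * (1 - (y : ℂ)) ^ (v - 1)‖
        ≤ ((y : ℂ) ^ ((x : ℂ) - 1) * (1 - (y : ℂ)) ^ ((v.re : ℂ) - 1)).re := by
    have integrand_ofReal : (y : ℂ) ^ ((x : ℂ) - 1) * (1 - (y : ℂ)) ^ ((v.re : ℂ) - 1)
        = ((y ^ (x - 1) * (1 - y) ^ (v.re - 1) : ℝ) : ℂ) := by
      push_cast [Complex.ofReal_cpow hy₀.le, Complex.ofReal_cpow (sub_pos.2 hy₁).le]
      rfl
    rw [integrand_ofReal, Complex.ofReal_re, norm_mul, ← Complex.ofReal_one, ← Complex.ofReal_sub,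
      Complex.norm_cpow_eq_rpow_re_of_pos hy₀,
      Complex.norm_cpow_eq_rpow_re_of_pos (sub_pos.2 hy₁)]
    exact mul_le_mul_of_nonneg_right
      (Real.rpow_le_rpow_of_exponent_ge hy₀ hy₁.le (by simpa using hxu))
      (Real.rpow_nonneg (sub_pos.2 hy₁).le _)
  have convergent := Complex.betaIntegral_convergent (u := x) (v := v.re) (by simpa) (by simpa)
  rw [ProbabilityTheory.beta_eq_betaIntegralReal x v.re hx hv]
  simp only [Complex.betaIntegral, intervalIntegral.integral_of_le zero_le_one,
    MeasureTheory.integral_Ioc_eq_integral_Ioo]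
  rw [intervalIntegrable_iff_integrableOn_Ioo_of_le zero_le_one] at convergent
  have re_integral := integral_re convergent
  simp only [RCLike.re_eq_complex_re] at re_integral
  rw [← re_integral]
  refine norm_integral_le_of_norm_le convergent.re ?_
  filter_upwards [ae_restrict_mem measurableSet_Ioo] with y hy
  exact norm_integrand hy.1 hy.2

lemma norm_Gamma_div_Gamma_add_le {x c : ℝ} {u : ℂ} (hx : 0 < x) (hxu : x ≤ u.re) (hc : 0 < c) :
    ‖Complex.Gamma u / Complex.Gamma (u + c)‖ ≤ Real.Gamma x / Real.Gamma (x + c) := by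
  have hΓc := Real.Gamma_pos_of_pos hc
  have h := norm_betaIntegral_le (v := c) hx hxu (by simpa)
  rw [Complex.betaIntegral_eq_Gamma_mul_div u c (by linarith) (by simpa), beta,
    Complex.ofReal_re, mul_div_right_comm, mul_div_right_comm, norm_mul, Complex.Gamma_ofReal,
    Complex.norm_of_nonneg hΓc.le] at h
  exact le_of_mul_le_mul_right h hΓc

lemma summable_Gamma_div_Gamma_add {x c : ℝ} (hx : 0 < x) (hc : 1 < c) :
    Summable fun l : ℕ ↦ Real.Gamma (x + l) / Real.Gamma (x + l + c) := by
  let ρ (l : ℕ) : ℝ := Real.Gamma (x + l) / Real.Gamma (x + l + (c - 1))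
  have Γ_pos {y : ℝ} (hy : 0 < y) : 0 < Real.Gamma y := Real.Gamma_pos_of_pos hy
  have telescope (l : ℕ) :
      Real.Gamma (x + l) / Real.Gamma (x + l + c) = (ρ l - ρ (l + 1)) / (c - 1) := by
    have numerator_succ : Real.Gamma (x + (l + 1 : ℕ)) = (x + l) * Real.Gamma (x + l) := by
      rw [← Real.Gamma_add_one (by positivity)]; push_cast; ring_nf
    have denominator_shift : Real.Gamma (x + (l + 1 : ℕ) + (c - 1)) = Real.Gamma (x + l + c) := by
      push_cast; ring_nf
    have denominator_succ : Real.Gamma (x + l + c) =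
        (x + l + (c - 1)) * Real.Gamma (x + l + (c - 1)) := by
      rw [← Real.Gamma_add_one (by linarith [Nat.cast_nonneg (α := ℝ) l])]; ring_nf
    have hpos : 0 < x + l + (c - 1) := by linarith [Nat.cast_nonneg (α := ℝ) l]
    have Γ_denominator_pos := Γ_pos hpos
    have hc' : c - 1 ≠ 0 := by linarith
    simp only [ρ]
    rw [numerator_succ, denominator_shift, denominator_succ]
    generalize c - 1 = d at *
    field_simp
    ring
  have ρ_nonneg (l : ℕ) : 0 ≤ ρ l :=
    (div_pos (Γ_pos (by positivity)) (Γ_pos (by linarith [Nat.cast_nonneg (α := ℝ) l]))).le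
  refine summable_of_sum_range_le (c := ρ 0 / (c - 1)) (fun l ↦
    (div_pos (Γ_pos (by positivity)) (Γ_pos (by positivity))).le) fun N ↦ ?_
  simp_rw [telescope]
  rw [← Finset.sum_div, Finset.sum_range_sub' ρ N]
  exact div_le_div_of_nonneg_right (by linarith [ρ_nonneg N]) (by linarith)

/-- The entire function `1 / (Γ(s - a + 1) Γ(-s + b + 1))`, which is the gamma product of a single
pair of exponents. -/
def recipGammaPair (a b : ℝ) (s : ℂ) : ℂ :=
  (Complex.Gamma (s - a + 1))⁻¹ * (Complex.Gamma (-s + b + 1))⁻¹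

namespace recipGammaPair

variable {a b : ℝ} {s : ℂ}

lemma differentiable (a b : ℝ) : Differentiable ℂ (recipGammaPair a b) :=
  (Complex.differentiable_one_div_Gamma.comp
    (by fun_prop : Differentiable ℂ fun s : ℂ ↦ s - a + 1)).mul
  (Complex.differentiable_one_div_Gamma.comp
    (by fun_prop : Differentiable ℂ fun s : ℂ ↦ -s + b + 1))

lemma eq_neg (a b : ℝ) (s : ℂ) : recipGammaPair a b s = recipGammaPair (-b) (-a) (-s) := by
  simp only [recipGammaPair, Complex.ofReal_neg, sub_neg_eq_add, neg_neg]
  rw [mul_comm, ← sub_eq_add_neg]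

lemma eq_Gamma_div_Gamma_mul_sin (hs : b < s.re) :
    recipGammaPair a b s = Complex.Gamma (s - b) / Complex.Gamma (s - b + (b - a + 1 : ℝ)) *
      (Complex.sin (π * (s - b)) / π) := by
  have hΓ : Complex.Gamma (s - b) ≠ 0 := Complex.Gamma_ne_zero_of_re_pos (by simpa using hs)
  have reflection : (Complex.Gamma (-s + b + 1))⁻¹ =
      Complex.Gamma (s - b) * (Complex.sin (π * (s - b)) / π) := by
    rw [← inv_div, ← Complex.Gamma_mul_Gamma_one_sub (s - b), mul_inv, mul_inv_cancel_left₀ hΓ]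
    ring_nf
  rw [recipGammaPair, reflection]
  push_cast
  ring_nf

lemma norm_le_of_le_re {x : ℝ} (hab : a < b + 1) (hx : 0 < x) (hs : b + x ≤ s.re) :
    ‖recipGammaPair a b s‖ ≤
      Real.exp (π * |s.im|) * (Real.Gamma x / Real.Gamma (x + (b - a + 1))) := by
  have norm_sin_div_le : ‖Complex.sin (π * (s - b)) / π‖ ≤ Real.exp (π * |s.im|) := by
    have h := norm_sin_le_exp_abs_im (π * (s - b))
    rw [Complex.im_ofReal_mul, Complex.sub_im, Complex.ofReal_im, sub_zero, abs_mul,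
      abs_of_pos Real.pi_pos] at h
    rw [norm_div, Complex.norm_of_nonneg Real.pi_pos.le]
    exact (div_le_self (norm_nonneg _) (by linarith [Real.pi_gt_three])).trans h
  rw [eq_Gamma_div_Gamma_mul_sin (by linarith), norm_mul, mul_comm]
  refine mul_le_mul norm_sin_div_le ?_ (norm_nonneg _) (Real.exp_pos _).le
  exact norm_Gamma_div_Gamma_add_le hx (by simpa [le_sub_iff_add_le'] using hs) (by linarith)

lemma sub_mul_eq (a b : ℝ) (s : ℂ) :
    (b - s) * recipGammaPair a b s = (s - a + 1) * recipGammaPair a b (s + 1) := by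
  rw [recipGammaPair, recipGammaPair, show s + 1 - a + 1 = s - a + 1 + 1 by ring,
    show -(s + 1) + b + 1 = -s + b by ring,
    Complex.one_div_Gamma_eq_self_mul_one_div_Gamma_add_one (s - a + 1),
    Complex.one_div_Gamma_eq_self_mul_one_div_Gamma_add_one (-s + b)]
  ring

lemma norm_le_mul_norm_add_one (hs : 1 ≤ |s.im|) :
    ‖recipGammaPair a b s‖ ≤ (1 + |b - a + 1|) * ‖recipGammaPair a b (s + 1)‖ := by
  have one_le : 1 ≤ ‖(b : ℂ) - s‖ := hs.trans (by simpa using Complex.abs_im_le_norm ((b : ℂ) - s))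
  have norm_le : ‖s - a + 1‖ ≤ (1 + |b - a + 1|) * ‖(b : ℂ) - s‖ := by
    calc ‖s - a + 1‖ = ‖((b - a + 1 : ℝ) : ℂ) - (b - s)‖ := by push_cast; ring_nf
      _ ≤ |b - a + 1| + ‖(b : ℂ) - s‖ := by
        simpa only [Complex.norm_real, Real.norm_eq_abs] using
          norm_sub_le ((b - a + 1 : ℝ) : ℂ) (b - s)
      _ ≤ (1 + |b - a + 1|) * ‖(b : ℂ) - s‖ := by nlinarith [abs_nonneg (b - a + 1)]
  refine le_of_mul_le_mul_left ?_ (one_pos.trans_le one_le)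
  rw [← norm_mul, sub_mul_eq, norm_mul, ← mul_assoc, mul_comm ‖(b : ℂ) - s‖]
  exact mul_le_mul_of_nonneg_right norm_le (norm_nonneg _)

lemma norm_le_pow_mul_norm_add_natCast (hs : 1 ≤ |s.im|) (N : ℕ) :
    ‖recipGammaPair a b s‖ ≤ (1 + |b - a + 1|) ^ N * ‖recipGammaPair a b (s + N)‖ := by
  induction N with
  | zero => simp
  | succ N ih =>
    have step : ‖recipGammaPair a b (s + N)‖ ≤ _ := norm_le_mul_norm_add_one (by simpa using hs)
    calc _ ≤ _ := ih
      _ ≤ _ := mul_le_mul_of_nonneg_left step (by positivity)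
      _ = _ := by push_cast; ring_nf

lemma exists_norm_le_of_abs_re_le (hab : a < b + 1) (M : ℝ) :
    ∃ C : ℝ, 0 ≤ C ∧ ∀ s : ℂ, |s.re| ≤ M → ‖recipGammaPair a b s‖ ≤ Real.exp (π * |s.im|) * C := by
  obtain ⟨N, hN⟩ := exists_nat_ge (b + 1 + M)
  obtain ⟨C, hC⟩ := (isCompact_Icc.reProdIm isCompact_Icc :
    IsCompact (Set.Icc (-M) M ×ℂ Set.Icc (-1 : ℝ) 1)).exists_bound_of_continuousOn
      (differentiable a b).continuous.continuousOn
  let K : ℝ := (1 + |b - a + 1|) ^ N * (Real.Gamma 1 / Real.Gamma (1 + (b - a + 1)))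
  have hK : 0 ≤ K := mul_nonneg (by positivity)
    (div_pos (Real.Gamma_pos_of_pos one_pos) (Real.Gamma_pos_of_pos (by linarith))).le
  refine ⟨max C K, hK.trans (le_max_right _ _), fun s hs ↦ ?_⟩
  rcases le_total |s.im| 1 with him | him
  · calc _ ≤ C := hC s (Complex.mem_reProdIm.2 ⟨abs_le.1 hs, abs_le.1 him⟩)
      _ ≤ max C K := le_max_left _ _
      _ ≤ _ := le_mul_of_one_le_left (hK.trans (le_max_right _ _))
        (Real.one_le_exp (by positivity))
  · have shifted : ‖recipGammaPair a b (s + N)‖ ≤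
        Real.exp (π * |s.im|) * (Real.Gamma 1 / Real.Gamma (1 + (b - a + 1))) := by
      simpa using norm_le_of_le_re (s := s + N) hab one_pos
        (by rw [Complex.add_re, Complex.natCast_re]; linarith [(abs_le.1 hs).1])
    calc _ ≤ _ := norm_le_pow_mul_norm_add_natCast him N
      _ ≤ (1 + |b - a + 1|) ^ N * _ := mul_le_mul_of_nonneg_left shifted (by positivity)
      _ = Real.exp (π * |s.im|) * K := by simp only [K]; ring
      _ ≤ _ := mul_le_mul_of_nonneg_left (le_max_right C K) (Real.exp_pos _).le

lemma exists_summable_norm_add_natCast_le (hab : a < b) (R : ℝ) :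
    ∃ r : ℕ → ℝ, Summable r ∧ (∀ l, 0 ≤ r l) ∧ ∀ (l : ℕ) (t : ℂ), |t.re| ≤ R →
      ‖recipGammaPair a b (l + t)‖ ≤ Real.exp (π * |t.im|) * r l := by
  obtain ⟨N, hN⟩ := exists_nat_ge (b + 1 + R)
  obtain ⟨C, hC₀, hC⟩ := exists_norm_le_of_abs_re_le (hab.trans (lt_add_one b)) (R + N)
  let ρ (k : ℕ) : ℝ := Real.Gamma (1 + k) / Real.Gamma (1 + k + (b - a + 1))
  have hρ : Summable ρ := summable_Gamma_div_Gamma_add one_pos (by linarith)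
  have ρ_nonneg (k : ℕ) : 0 ≤ ρ k := (div_pos (Real.Gamma_pos_of_pos (by positivity))
    (Real.Gamma_pos_of_pos (by linarith [Nat.cast_nonneg (α := ℝ) k]))).le
  refine ⟨fun l ↦ if l < N then C else ρ (l - N), ?_, fun l ↦ ?_, fun l t ht ↦ ?_⟩
  · exact (summable_nat_add_iff N).1 (by simpa using hρ)
  · dsimp only
    split_ifs
    exacts [hC₀, ρ_nonneg _]
  · have ht' := abs_le.1 ht
    dsimp only
    split_ifs with hl
    · have hlN : (l : ℝ) ≤ N := by exact_mod_cast hl.le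
      have hl₀ : (0 : ℝ) ≤ l := Nat.cast_nonneg l
      simpa using hC (l + t) (by simpa using abs_le.2 ⟨by linarith [hl₀], by linarith⟩)
    · have hlN : ((l - N : ℕ) : ℝ) = l - N := Nat.cast_sub (not_lt.1 hl)
      simpa using norm_le_of_le_re (x := 1 + (l - N : ℕ)) (s := l + t)
        (hab.trans (lt_add_one b)) (by positivity)
        (by rw [hlN, Complex.add_re, Complex.natCast_re]; linarith)

lemma sub_succ_eq_zero (a b : ℝ) (k : ℕ) : recipGammaPair a b (a - (k + 1)) = 0 := by
  rw [recipGammaPair, show (a : ℂ) - (k + 1) - a + 1 = -k by ring,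
    Complex.Gamma_neg_nat_eq_zero, inv_zero, zero_mul]

lemma add_succ_eq_zero (a b : ℝ) (k : ℕ) : recipGammaPair a b (b + (k + 1)) = 0 := by
  rw [eq_neg, ← sub_succ_eq_zero (-b) (-a) k]
  push_cast
  ring_nf

end recipGammaPair

end GammaBounds

section ShiftSummable

variable {f g : ℂ → ℂ} {G H : ℝ → ℝ}

/-- The entire function `f` is absolutely summable along each coset `t + ℤ`, uniformly for bounded
`Re t` and with a loss of at most `G y` at height `y = Im t`. -/
structure ShiftSummable (f : ℂ → ℂ) (G : ℝ → ℝ) : Prop where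
  differentiable : Differentiable ℂ f
  continuous_growth : Continuous G
  exists_bound (R : ℝ) : ∃ r : ℤ → ℝ, Summable r ∧ (∀ l, 0 ≤ r l) ∧ ∀ (l : ℤ) (t : ℂ),
    |t.re| ≤ R → ‖f (l + t)‖ ≤ G t.im * r l

namespace ShiftSummable

lemma differentiable_add_left (hf : ShiftSummable f G) (a : ℂ) :
    Differentiable ℂ fun t ↦ f (a + t) :=
  hf.differentiable.comp (differentiable_id.const_add a)

lemma mul (hf : ShiftSummable f G) (hg : ShiftSummable g H) :
    ShiftSummable (fun s ↦ f s * g s) fun y ↦ G y * H y where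
  differentiable := hf.differentiable.mul hg.differentiable
  continuous_growth := hf.continuous_growth.mul hg.continuous_growth
  exists_bound R := by
    obtain ⟨r, hr, r_nonneg, le_r⟩ := hf.exists_bound R
    obtain ⟨ρ, hρ, ρ_nonneg, le_ρ⟩ := hg.exists_bound R
    refine ⟨fun l ↦ r l * ρ l, ?_, fun l ↦ mul_nonneg (r_nonneg l) (ρ_nonneg l), fun l t ht ↦ ?_⟩
    · refine (hr.mul_right (∑' k, ρ k)).of_nonneg_of_le
        (fun l ↦ mul_nonneg (r_nonneg l) (ρ_nonneg l)) fun l ↦ ?_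
      exact mul_le_mul_of_nonneg_left (hρ.le_tsum l fun k _ ↦ ρ_nonneg k) (r_nonneg l)
    · rw [norm_mul, mul_mul_mul_comm]
      exact mul_le_mul (le_r l t ht) (le_ρ l t ht) (norm_nonneg _)
        ((norm_nonneg _).trans (le_r l t ht))

lemma prod {ι : Type*} {s : Finset ι} (hs : s.Nonempty) {f : ι → ℂ → ℂ} {G : ι → ℝ → ℝ}
    (hf : ∀ i ∈ s, ShiftSummable (f i) (G i)) :
    ShiftSummable (fun t ↦ ∏ i ∈ s, f i t) fun y ↦ ∏ i ∈ s, G i y := by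
  induction hs using Finset.Nonempty.cons_induction with
  | singleton i => simpa using hf i (Finset.mem_singleton_self i)
  | cons i s hi _ ih =>
    simp only [Finset.prod_cons]
    exact (hf i (Finset.mem_cons_self i s)).mul (ih fun j hj ↦ hf j (Finset.mem_cons_of_mem hj))

lemma mul_exp (hf : ShiftSummable f G) {w : ℂ} (hw : w.re = 0) :
    ShiftSummable (fun s ↦ f s * Complex.exp (s * w)) fun y ↦ G y * Real.exp (-(y * w.im)) where
  differentiable := hf.differentiable.mul (by fun_prop)
  continuous_growth := hf.continuous_growth.mul (by fun_prop)
  exists_bound R := by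
    obtain ⟨r, hr, r_nonneg, le_r⟩ := hf.exists_bound R
    refine ⟨r, hr, r_nonneg, fun l t ht ↦ ?_⟩
    have norm_exp : ‖Complex.exp ((l + t) * w)‖ = Real.exp (-(t.im * w.im)) := by
      simp [Complex.norm_exp, hw]
    rw [norm_mul, norm_exp, mul_right_comm]
    exact mul_le_mul_of_nonneg_right (le_r l t ht) (Real.exp_pos _).le

lemma exists_summable_norm_mul_exp_le (hf : ShiftSummable f G) (R : ℝ) :
    ∃ u : ℤ → ℝ, Summable u ∧ ∀ (l : ℤ) (t w : ℂ), ‖t‖ ≤ R → l * w.re ≤ 0 →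
      ‖f (l + t) * Complex.exp ((l + t) * w)‖ ≤ u l * Real.exp (R * ‖w‖) := by
  obtain ⟨r, hr, r_nonneg, le_r⟩ := hf.exists_bound R
  obtain ⟨M, hM⟩ := (isCompact_Icc (a := -R) (b := R)).exists_bound_of_continuousOn
    hf.continuous_growth.continuousOn
  refine ⟨fun l ↦ M * r l, hr.mul_left M, fun l t w ht hlw ↦ ?_⟩
  have G_le : G t.im ≤ M := (Real.le_norm_self _).trans
    (hM _ (abs_le.1 ((Complex.abs_im_le_norm t).trans ht)))
  have norm_f_le : ‖f (l + t)‖ ≤ M * r l := (le_r l t ((Complex.abs_re_le_norm t).trans ht)).trans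
    (mul_le_mul_of_nonneg_right G_le (r_nonneg l))
  have re_le : (((l : ℂ) + t) * w).re ≤ R * ‖w‖ := by
    calc (((l : ℂ) + t) * w).re = l * w.re + (t * w).re := by simp [add_mul]
      _ ≤ 0 + ‖t‖ * ‖w‖ := add_le_add hlw (norm_mul t w ▸ Complex.re_le_norm (t * w))
      _ ≤ R * ‖w‖ := by rw [zero_add]; exact mul_le_mul_of_nonneg_right ht (norm_nonneg w)
  rw [norm_mul, Complex.norm_exp]
  exact mul_le_mul norm_f_le (Real.exp_le_exp.2 re_le) (Real.exp_pos _).le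
    ((norm_nonneg _).trans norm_f_le)

lemma exists_summable_norm_iteratedDeriv_le (hf : ShiftSummable f G) (ν : ℂ) (r : ℕ) (B : ℝ) :
    ∃ u : ℤ → ℝ, Summable u ∧ ∀ (l : ℤ) (w : ℂ), l * w.re ≤ 0 → ‖w‖ ≤ B →
      ‖iteratedDeriv r (fun t ↦ f (l + t) * Complex.exp ((l + t) * w)) ν‖ ≤ u l := by
  obtain ⟨u, hu, le_u⟩ := hf.exists_summable_norm_mul_exp_le (‖ν‖ + 1)
  have u_nonneg (l : ℤ) : 0 ≤ u l := by
    simpa using (norm_nonneg _).trans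
      (le_u l 0 0 (by rw [norm_zero]; positivity) (by simp))
  refine ⟨fun l ↦ r.factorial * (u l * Real.exp ((‖ν‖ + 1) * B)), (hu.mul_right _).mul_left _,
    fun l w hlw hw ↦ ?_⟩
  have differentiable : Differentiable ℂ fun t ↦ f (l + t) * Complex.exp ((l + t) * w) :=
    (hf.differentiable_add_left l).mul (by fun_prop)
  have bound_on_sphere (t : ℂ) (ht : t ∈ Metric.sphere ν 1) :
      ‖f (l + t) * Complex.exp ((l + t) * w)‖ ≤ u l * Real.exp ((‖ν‖ + 1) * B) := by
    refine (le_u l t w ?_ hlw).trans (mul_le_mul_of_nonneg_left ?_ (u_nonneg l))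
    · simpa [mem_sphere_iff_norm.1 ht] using norm_add_le ν (t - ν)
    · exact Real.exp_le_exp.2 (mul_le_mul_of_nonneg_left hw (by positivity))
  simpa using Complex.norm_iteratedDeriv_le_of_forall_mem_sphere_norm_le r one_pos
    differentiable.diffContOnCl bound_on_sphere

lemma exists_summable_norm_le (hf : ShiftSummable f G) (R : ℝ) :
    ∃ u : ℤ → ℝ, Summable u ∧ ∀ (l : ℤ) (t : ℂ), ‖t‖ ≤ R → ‖f (l + t)‖ ≤ u l := by
  obtain ⟨u, hu, le_u⟩ := hf.exists_summable_norm_mul_exp_le R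
  exact ⟨u, hu, fun l t ht ↦ by simpa using le_u l t 0 ht (by simp)⟩

end ShiftSummable

lemma recipGammaPair.shiftSummable {a b : ℝ} (hab : a < b) :
    ShiftSummable (recipGammaPair a b) fun y ↦ Real.exp (π * |y|) where
  differentiable := recipGammaPair.differentiable a b
  continuous_growth := by fun_prop
  exists_bound R := by
    obtain ⟨r₁, hr₁, r₁_nonneg, le_r₁⟩ := recipGammaPair.exists_summable_norm_add_natCast_le hab R
    obtain ⟨r₂, hr₂, r₂_nonneg, le_r₂⟩ :=
      recipGammaPair.exists_summable_norm_add_natCast_le (neg_lt_neg hab) R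
    refine ⟨fun l ↦ r₁ l.natAbs + r₂ l.natAbs, ?_,
      fun l ↦ add_nonneg (r₁_nonneg _) (r₂_nonneg _), fun l t ht ↦ ?_⟩
    · exact .of_nat_of_neg (by simpa using hr₁.add hr₂) (by simpa using hr₁.add hr₂)
    · rcases l.eq_nat_or_neg with ⟨k, rfl | rfl⟩
      · refine (le_r₁ k t ht).trans (mul_le_mul_of_nonneg_left ?_ (Real.exp_pos _).le)
        simpa using r₂_nonneg k
      · have h := le_r₂ k (-t) (by simpa using ht)
        rw [show (k : ℂ) + -t = -(((-k : ℤ) : ℂ) + t) by push_cast; ring,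
          ← recipGammaPair.eq_neg, Complex.neg_im, abs_neg] at h
        refine h.trans (mul_le_mul_of_nonneg_left ?_ (Real.exp_pos _).le)
        simpa using r₁_nonneg k

end ShiftSummable

section IteratedDeriv

lemma iteratedDeriv_mul_cexp_const_mul {g : ℂ → ℂ} (hg : Differentiable ℂ g) (r : ℕ) (w ν : ℂ) :
    iteratedDeriv r (fun t ↦ g t * Complex.exp (w * t)) ν =
      ∑ i ∈ Finset.range (r + 1),
        (r.choose i : ℂ) * iteratedDeriv i g ν * (w ^ (r - i) * Complex.exp (w * ν)) := by
  rw [iteratedDeriv_fun_mul hg.contDiff.contDiffAt (by fun_prop)]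
  simp only [iteratedDeriv_cexp_const_mul]

lemma iteratedDeriv_tsum_of_differentiable {ι : Type*} {f : ι → ℂ → ℂ}
    (hf : ∀ i, Differentiable ℂ (f i))
    (bound : ∀ R : ℝ, ∃ u : ι → ℝ, Summable u ∧ ∀ i t, ‖t‖ ≤ R → ‖f i t‖ ≤ u i) (r : ℕ) (t : ℂ) :
    iteratedDeriv r (fun t ↦ ∑' i, f i t) t = ∑' i, iteratedDeriv r (f i) t := by
  induction r generalizing f t with
  | zero => simp
  | succ r ih =>
    have deriv_tsum : deriv (fun t ↦ ∑' i, f i t) = fun t ↦ ∑' i, deriv (f i) t := by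
      funext z
      obtain ⟨u, hu, le_u⟩ := bound (‖z‖ + 1)
      exact (Complex.hasSum_deriv_of_summable_norm (U := Metric.ball 0 (‖z‖ + 1)) hu
        (fun i ↦ (hf i).differentiableOn) Metric.isOpen_ball
        (fun i w hw ↦ le_u i w (mem_ball_zero_iff.1 hw).le) (by simp)).tsum_eq.symm
    have deriv_bound (R : ℝ) :
        ∃ u : ι → ℝ, Summable u ∧ ∀ i t, ‖t‖ ≤ R → ‖deriv (f i) t‖ ≤ u i := by
      obtain ⟨u, hu, le_u⟩ := bound (R + 1)
      refine ⟨u, hu, fun i t ht ↦ ?_⟩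
      have bound_on_sphere (z : ℂ) (hz : z ∈ Metric.sphere t 1) : ‖f i z‖ ≤ u i :=
        le_u i z (by linarith [norm_le_norm_add_norm_sub' z t, mem_sphere_iff_norm.1 hz])
      simpa using Complex.norm_deriv_le_of_forall_mem_sphere_norm_le one_pos
        (hf i).diffContOnCl bound_on_sphere
    simp_rw [iteratedDeriv_succ', deriv_tsum]
    exact ih (fun i ↦ (hf i).deriv) deriv_bound t

end IteratedDeriv

section Periodization

variable {f : ℂ → ℂ} {G : ℝ → ℝ}

/-- The sum of all translates of `f` by integers. -/
def periodization (f : ℂ → ℂ) (t : ℂ) : ℂ := ∑' l : ℤ, f (l + t)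

lemma periodization_periodic (f : ℂ → ℂ) : Function.Periodic (periodization f) 1 := fun t ↦ by
  rw [periodization, periodization, ← (Equiv.addRight (1 : ℤ)).tsum_eq fun l : ℤ ↦ f (l + t)]
  simp only [Equiv.coe_addRight, Int.cast_add, Int.cast_one, add_assoc, add_comm (1 : ℂ)]

namespace ShiftSummable

lemma differentiable_periodization (hf : ShiftSummable f G) :
    Differentiable ℂ (periodization f) := fun z ↦ by
  obtain ⟨u, hu, le_u⟩ := hf.exists_summable_norm_le (‖z‖ + 1)
  exact (Complex.differentiableOn_tsum_of_summable_norm (U := Metric.ball 0 (‖z‖ + 1)) hu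
    (fun l ↦ (hf.differentiable_add_left l).differentiableOn) Metric.isOpen_ball
    (fun l t ht ↦ le_u l t (mem_ball_zero_iff.1 ht).le)).differentiableAt
      (Metric.isOpen_ball.mem_nhds (by simp))

lemma iteratedDeriv_periodization (hf : ShiftSummable f G) (r : ℕ) (t : ℂ) :
    iteratedDeriv r (periodization f) t = ∑' l : ℤ, iteratedDeriv r (fun t ↦ f (l + t)) t :=
  iteratedDeriv_tsum_of_differentiable (fun l : ℤ ↦ hf.differentiable_add_left l)
    hf.exists_summable_norm_le r t

lemma exists_norm_periodization_le (hf : ShiftSummable f G) :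
    ∃ C : ℝ, ∀ t : ℂ, ‖periodization f t‖ ≤ C * G t.im := by
  obtain ⟨r, hr, -, le_r⟩ := hf.exists_bound 1
  refine ⟨∑' l, r l, fun t ↦ ?_⟩
  have periodic := (periodization_periodic f).sub_int_mul_eq ⌊t.re⌋ (x := t)
  have abs_re_le : |(t - ⌊t.re⌋ * 1).re| ≤ 1 := by
    simpa [abs_of_nonneg (Int.fract_nonneg t.re)] using (Int.fract_lt_one t.re).le
  have him : (t - ⌊t.re⌋ * 1).im = t.im := by simp
  rw [← periodic, ← him, ← tsum_mul_right]
  refine tsum_of_norm_bounded (hr.mul_right _).hasSum fun l ↦ ?_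
  exact (le_r l _ abs_re_le).trans_eq (mul_comm _ _)

end ShiftSummable

end Periodization

section ExponentSeries

variable {κ : Type*} {f : ℂ → ℂ} {G : ℝ → ℝ} {e : κ → ℤ}

/-- The series `(2πi)⁻ʳ (d/dt)ʳ ∑ₖ f(e k + t) exp((e k + t) w)` at `t = ν`, differentiated termwise.
With `f` the gamma product, `e k = k` and `e k = -k` give the local solutions at `0` and at `∞`. -/
def exponentSeries (f : ℂ → ℂ) (e : κ → ℤ) (ν : ℂ) (r : ℕ) (w : ℂ) : ℂ :=
  ∑' k, ((2 * (π : ℂ) * Complex.I) ^ r)⁻¹ *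
    iteratedDeriv r (fun t ↦ f (e k + t) * Complex.exp ((e k + t) * w)) ν

lemma continuous_iteratedDeriv_mul_exp (hf : ShiftSummable f G) (l : ℤ) (r : ℕ) (ν : ℂ) :
    Continuous fun w ↦ iteratedDeriv r (fun t ↦ f (l + t) * Complex.exp ((l + t) * w)) ν := by
  have iteratedDeriv_eq (w : ℂ) :
      iteratedDeriv r (fun t ↦ f (l + t) * Complex.exp ((l + t) * w)) ν =
        Complex.exp (l * w) * ∑ i ∈ Finset.range (r + 1), (r.choose i : ℂ) *
          iteratedDeriv i (fun t ↦ f (l + t)) ν * (w ^ (r - i) * Complex.exp (w * ν)) := by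
    rw [← iteratedDeriv_mul_cexp_const_mul (hf.differentiable_add_left l),
      ← iteratedDeriv_const_mul_field]
    congr 1
    funext t
    rw [add_mul, Complex.exp_add, mul_comm t w]
    ring
  simp_rw [iteratedDeriv_eq]
  fun_prop

lemma summable_iteratedDeriv_mul_exp (hf : ShiftSummable f G) (he : Function.Injective e) (ν : ℂ)
    (r : ℕ) {w : ℂ} (hw : ∀ k, e k * w.re ≤ 0) :
    Summable fun k ↦ iteratedDeriv r (fun t ↦ f (e k + t) * Complex.exp ((e k + t) * w)) ν := by
  obtain ⟨u, hu, le_u⟩ := hf.exists_summable_norm_iteratedDeriv_le ν r ‖w‖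
  exact .of_norm_bounded (hu.comp_injective he) fun k ↦ le_u (e k) w (hw k) le_rfl

lemma continuousOn_exponentSeries (hf : ShiftSummable f G) (he : Function.Injective e) (ν : ℂ)
    (r : ℕ) : ContinuousOn (exponentSeries f e ν r) {w | ∀ k, e k * w.re ≤ 0} := by
  intro w₀ _
  obtain ⟨u, hu, le_u⟩ := hf.exists_summable_norm_iteratedDeriv_le ν r (‖w₀‖ + 1)
  refine tendsto_tsum_of_dominated_convergence
    ((hu.comp_injective he).mul_left ‖((2 * (π : ℂ) * Complex.I) ^ r)⁻¹‖)
    (fun k ↦ (((continuous_iteratedDeriv_mul_exp hf (e k) r ν).tendsto w₀).mono_left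
      nhdsWithin_le_nhds).const_mul _) ?_
  have norm_le : ∀ᶠ w in 𝓝[{w | ∀ k, e k * w.re ≤ 0}] w₀, ‖w‖ ≤ ‖w₀‖ + 1 :=
    nhdsWithin_le_nhds (continuous_norm.continuousAt.eventually (eventually_le_nhds (by simp)))
  filter_upwards [norm_le, self_mem_nhdsWithin] with w hw hwe k
  rw [norm_mul]
  exact mul_le_mul_of_nonneg_left (le_u (e k) w (hwe k) hw) (norm_nonneg _)

lemma exponentSeries_eq_iteratedDeriv_periodization (hf : ShiftSummable f G)
    (he : Function.Injective e) {ν : ℂ} {r : ℕ} {w : ℂ} (hw : w.re = 0)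
    (vanish : ∀ l ∉ Set.range e,
      iteratedDeriv r (fun t ↦ f (l + t) * Complex.exp ((l + t) * w)) ν = 0) :
    exponentSeries f e ν r w = ((2 * (π : ℂ) * Complex.I) ^ r)⁻¹ *
      iteratedDeriv r (periodization fun s ↦ f s * Complex.exp (s * w)) ν := by
  rw [exponentSeries, tsum_mul_left, (hf.mul_exp hw).iteratedDeriv_periodization]
  congr 1
  exact he.tsum_eq (f := fun l : ℤ ↦ iteratedDeriv r _ ν)
    fun l hl ↦ not_not.1 fun hle ↦ hl (vanish l hle)

lemma iteratedDeriv_mul_exp_add_two_pi_I {l : ℤ} (hf : Differentiable ℂ fun t ↦ f (l + t)) (r : ℕ)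
    (ν w : ℂ) :
    iteratedDeriv r (fun t ↦ f (l + t) * Complex.exp ((l + t) * (w + 2 * π * I))) ν =
      ∑ i ∈ Finset.range (r + 1), (r.choose i : ℂ) *
        iteratedDeriv i (fun t ↦ f (l + t) * Complex.exp ((l + t) * w)) ν *
          ((2 * π * I) ^ (r - i) * Complex.exp (2 * π * I * ν)) := by
  have hfw : Differentiable ℂ fun t ↦ f (l + t) * Complex.exp ((l + t) * w) :=
    hf.mul (by fun_prop)
  rw [← iteratedDeriv_mul_cexp_const_mul hfw]
  congr 1
  funext t
  rw [mul_assoc (f _), ← Complex.exp_add]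
  congr 1
  exact Complex.exp_eq_exp_iff_exists_int.2 ⟨l, by ring⟩

lemma exponentSeries_add_two_pi_I (hf : ShiftSummable f G) (he : Function.Injective e) (ν : ℂ)
    (r : ℕ) {w : ℂ} (hw : ∀ k, e k * w.re ≤ 0) :
    exponentSeries f e ν r (w + 2 * π * I) = ∑ i ∈ Finset.range (r + 1),
      (r.choose i : ℂ) * Complex.exp (2 * π * I * ν) * exponentSeries f e ν i w := by
  have normalization {i : ℕ} (hi : i ∈ Finset.range (r + 1)) :
      ((2 * π * I : ℂ) ^ r)⁻¹ * (2 * π * I) ^ (r - i) = ((2 * π * I) ^ i)⁻¹ := by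
    rw [pow_sub₀ _ Complex.two_pi_I_ne_zero (Finset.mem_range_succ_iff.1 hi),
      inv_mul_cancel_left₀ (pow_ne_zero r Complex.two_pi_I_ne_zero)]
  have leibniz (k : κ) :
      ((2 * π * I : ℂ) ^ r)⁻¹ * iteratedDeriv r
        (fun t ↦ f (e k + t) * Complex.exp ((e k + t) * (w + 2 * π * I))) ν =
      ∑ i ∈ Finset.range (r + 1), (r.choose i : ℂ) * Complex.exp (2 * π * I * ν) *
        (((2 * π * I) ^ i)⁻¹ *
          iteratedDeriv i (fun t ↦ f (e k + t) * Complex.exp ((e k + t) * w)) ν) := by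
    rw [iteratedDeriv_mul_exp_add_two_pi_I (hf.differentiable_add_left (e k)), Finset.mul_sum]
    refine Finset.sum_congr rfl fun i hi ↦ ?_
    rw [← normalization hi]
    ring
  simp only [exponentSeries]
  rw [tsum_congr leibniz, Summable.tsum_finsetSum fun i _ ↦
    ((summable_iteratedDeriv_mul_exp hf he ν i hw).mul_left _).mul_left _]
  simp only [tsum_mul_left]

end ExponentSeries

section TrigonometricPolynomials

lemma exists_eq_sum_range_of_norm_le_rpow {f : ℂ → ℂ} (hf : Differentiable ℂ f) {n : ℕ} {C e : ℝ}
    (he : e < n + 1) (hfe : ∀ q : ℂ, 1 ≤ ‖q‖ → ‖f q‖ ≤ C * ‖q‖ ^ e) :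
    ∃ d : ℕ → ℂ, ∀ q, f q = ∑ k ∈ Finset.range (n + 1), d k * q ^ k := by
  have cauchy_estimate (k : ℕ) {R : ℝ} (hR : 1 ≤ R) :
      ‖iteratedDeriv k f 0‖ ≤ k.factorial * C * R ^ (-(k - e)) := by
    have bound_on_sphere (q : ℂ) (hq : q ∈ Metric.sphere 0 R) : ‖f q‖ ≤ C * R ^ e := by
      rw [← mem_sphere_zero_iff_norm.1 hq] at hR ⊢
      exact hfe q hR
    refine (Complex.norm_iteratedDeriv_le_of_forall_mem_sphere_norm_le k (by linarith)
      hf.diffContOnCl bound_on_sphere).trans_eq ?_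
    rw [neg_sub, Real.rpow_sub (by linarith), Real.rpow_natCast]
    ring
  have iteratedDeriv_eq_zero {k : ℕ} (hk : n + 1 ≤ k) : iteratedDeriv k f 0 = 0 := by
    have hk' : (n : ℝ) + 1 ≤ k := by exact_mod_cast hk
    have tendsto_zero := (tendsto_rpow_neg_atTop (y := k - e) (by linarith)).const_mul
      (k.factorial * C)
    rw [mul_zero] at tendsto_zero
    exact norm_le_zero_iff.1 (ge_of_tendsto tendsto_zero
      (eventually_atTop.2 ⟨1, fun R hR ↦ cauchy_estimate k hR⟩))
  refine ⟨fun k ↦ (k.factorial : ℂ)⁻¹ * iteratedDeriv k f 0, fun q ↦ ?_⟩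
  rw [← (Complex.hasSum_taylorSeries_of_entire hf 0 q).tsum_eq,
    tsum_eq_sum (s := Finset.range (n + 1)) fun k hk ↦ by
      rw [iteratedDeriv_eq_zero (by simpa using hk), smul_zero, smul_zero]]
  refine Finset.sum_congr rfl fun k _ ↦ ?_
  rw [sub_zero, smul_eq_mul, smul_eq_mul]
  ring

open Function.Periodic in
lemma differentiable_cuspFunction {Q : ℂ → ℂ} (hQ : Differentiable ℂ Q)
    (hper : Function.Periodic Q 1) (hbdd : BoundedAtFilter (comap Complex.im atTop) Q) :
    Differentiable ℂ (cuspFunction 1 Q) := fun q ↦ by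
  have hper' : Function.Periodic Q (1 : ℝ) := by simpa using hper
  rcases eq_or_ne q 0 with rfl | hq
  · exact differentiableAt_cuspFunction_zero one_pos hper' (.of_forall fun z ↦ hQ z) hbdd
  · simpa only [qParam_right_inv one_ne_zero hq] using
      differentiableAt_cuspFunction one_ne_zero hper' (hQ (invQParam 1 q))

open Function.Periodic in
lemma exists_eq_sum_exp_of_periodic_of_zeroAtFilter {Q : ℂ → ℂ} (hQ : Differentiable ℂ Q)
    (hper : Function.Periodic Q 1) (hzero : ZeroAtFilter (comap Complex.im atTop) Q)
    {n : ℕ} {C e : ℝ} (he : e < n + 1)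
    (hQe : ∀ t : ℂ, t.im ≤ 0 → ‖Q t‖ ≤ C * Real.exp (-(2 * π * e * t.im))) :
    ∃ c : Fin n → ℂ, ∀ t, Q t = ∑ k : Fin n, c k * Complex.exp (2 * π * I * (k + 1 : ℕ) * t) := by
  have hper' : Function.Periodic Q (1 : ℝ) := by simpa using hper
  have cuspFunction_le (q : ℂ) (hq : 1 ≤ ‖q‖) : ‖cuspFunction 1 Q q‖ ≤ C * ‖q‖ ^ e := by
    have hq₀ : q ≠ 0 := norm_pos_iff.1 (one_pos.trans_le hq)
    obtain ⟨t, rfl⟩ : ∃ t, qParam 1 t = q := ⟨_, qParam_right_inv one_ne_zero hq₀⟩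
    rw [eq_cuspFunction one_ne_zero hper']
    rw [norm_qParam, Real.one_le_exp_iff] at hq
    rw [norm_qParam, ← Real.exp_mul]
    convert hQe t (by nlinarith [Real.pi_pos]) using 3
    ring
  obtain ⟨d, hd⟩ := exists_eq_sum_range_of_norm_le_rpow
    (differentiable_cuspFunction hQ hper hzero.boundedAtFilter) he cuspFunction_le
  have d_zero : d 0 = 0 := by
    have h := hd 0
    rw [cuspFunction_zero_of_zero_at_inf one_pos hzero, Finset.sum_range_succ'] at h
    simpa using h.symm
  refine ⟨fun k ↦ d (k + 1), fun t ↦ ?_⟩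
  rw [← eq_cuspFunction one_ne_zero hper' t, hd, Finset.sum_range_succ', d_zero, zero_mul,
    add_zero, Finset.sum_range]
  refine Finset.sum_congr rfl fun k _ ↦ ?_
  rw [qParam, ← Complex.exp_nat_mul, Complex.ofReal_one, div_one, mul_left_comm, mul_assoc]
  ring_nf

lemma zeroAtFilter_im_atTop_of_norm_le_exp {Q : ℂ → ℂ} {C a : ℝ} (ha : a < 0)
    (hQ : ∀ t : ℂ, 0 ≤ t.im → ‖Q t‖ ≤ C * Real.exp (a * t.im)) :
    ZeroAtFilter (comap Complex.im atTop) Q := by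
  have decay : Tendsto (fun y : ℝ ↦ C * Real.exp (a * y)) atTop (𝓝 0) := by
    simpa using (Real.tendsto_exp_atBot.comp
      (tendsto_id.const_mul_atTop_of_neg ha)).const_mul C
  refine squeeze_zero_norm' ?_ (decay.comp tendsto_comap)
  filter_upwards [(eventually_ge_atTop (0 : ℝ)).comap Complex.im] with t ht
  exact hQ t ht

lemma exists_eq_sum_exp_of_periodic_of_norm_le {P : ℂ → ℂ} (hP : Differentiable ℂ P)
    (hper : Function.Periodic P 1) {n : ℕ} {l : ℤ} {φ C : ℝ}
    (hφ : φ ∈ Set.Ioo (-(n : ℝ) / 2 + l) (-(n : ℝ) / 2 + l + 1))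
    (hPφ : ∀ t : ℂ, ‖P t‖ ≤ C * Real.exp (n * π * |t.im| - 2 * π * φ * t.im)) :
    ∃ c : Fin n → ℂ, ∀ t, P t =
      ∑ k : Fin n, c k * Complex.exp (2 * π * I * ((l - (k : ℕ) : ℤ) : ℂ) * t) := by
  let Q (t : ℂ) : ℂ := P (-t) * Complex.exp (2 * π * I * (l + 1) * t)
  have hQ : Differentiable ℂ Q := (hP.comp differentiable_neg).mul (by fun_prop)
  have Q_periodic : Function.Periodic Q 1 := fun t ↦ by
    simp only [Q]
    rw [neg_add', hper.sub_eq]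
    congr 1
    exact Complex.exp_eq_exp_iff_exists_int.2 ⟨l + 1, by push_cast; ring⟩
  have norm_Q_le (t : ℂ) :
      ‖Q t‖ ≤ C * Real.exp (n * π * |t.im| - 2 * π * (l + 1 - φ) * t.im) := by
    have norm_exp : ‖Complex.exp (2 * π * I * (l + 1) * t)‖ =
        Real.exp (-(2 * π * (l + 1) * t.im)) := by
      simp [Complex.norm_exp]
    rw [norm_mul, norm_exp]
    refine (mul_le_mul_of_nonneg_right (hPφ (-t)) (Real.exp_pos _).le).trans_eq ?_
    rw [mul_assoc, ← Real.exp_add, Complex.neg_im, abs_neg]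
    ring_nf
  have rate_neg : n * π - 2 * π * (l + 1 - φ) < 0 := by nlinarith [Real.pi_pos, hφ.2]
  have Q_zero : ZeroAtFilter (comap Complex.im atTop) Q :=
    zeroAtFilter_im_atTop_of_norm_le_exp rate_neg fun t ht ↦ by
      simpa only [abs_of_nonneg ht, sub_mul] using norm_Q_le t
  obtain ⟨c, hc⟩ := exists_eq_sum_exp_of_periodic_of_zeroAtFilter hQ Q_periodic Q_zero
    (e := n / 2 + l + 1 - φ) (C := C) (n := n) (by linarith [hφ.1]) fun t ht ↦ by
      refine (norm_Q_le t).trans_eq ?_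
      rw [abs_of_nonpos ht]
      ring_nf
  refine ⟨c, fun t ↦ ?_⟩
  have P_eq : P t = Q (-t) * Complex.exp (2 * π * I * (l + 1) * t) := by
    simp only [Q]
    rw [neg_neg, mul_assoc, ← Complex.exp_add]
    simp
  rw [P_eq, hc, Finset.sum_mul]
  refine Finset.sum_congr rfl fun k _ ↦ ?_
  rw [mul_assoc, ← Complex.exp_add]
  push_cast
  ring_nf

end TrigonometricPolynomials

section GammaProduct

variable {n : ℕ} {α β : Fin n → ℝ}

/-- The gamma product of real exponents, written as a product over the pairs `(α i, β i)`, each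
factor of which is already summable along the integers. -/
def recipGammaProd (α β : Fin n → ℝ) (s : ℂ) : ℂ := ∏ i, recipGammaPair (α i) (β i) s

lemma gammaProd_ofReal (α β : Fin n → ℝ) :
    gammaProd (fun i ↦ (α i : ℂ)) (fun i ↦ (β i : ℂ)) = recipGammaProd α β := by
  funext s
  simp only [gammaProd, recipGammaProd, recipGammaPair, Finset.prod_mul_distrib]

lemma gA_eq_exponentSeries (α β : Fin n → ℝ) (ν : ℝ) (r : ℕ) :
    gA α β ν r = exponentSeries (recipGammaProd α β) (fun k : ℕ ↦ (k : ℤ)) ν r := by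
  funext w
  simp only [gA, exponentSeries, gammaProd_ofReal, Int.cast_natCast]

lemma gB_eq_exponentSeries (α β : Fin n → ℝ) (ν' : ℝ) (r : ℕ) :
    gB α β ν' r = exponentSeries (recipGammaProd α β) (fun k : ℕ ↦ -(k : ℤ)) ν' r := by
  funext w
  simp only [gB, exponentSeries, gammaProd_ofReal, Int.cast_neg, Int.cast_natCast]

lemma recipGammaProd.shiftSummable [NeZero n] (hab : ∀ i, α i < β i) :
    ShiftSummable (recipGammaProd α β) fun y ↦ Real.exp (n * π * |y|) := by
  have h := ShiftSummable.prod Finset.univ_nonempty fun i _ ↦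
    recipGammaPair.shiftSummable (hab i)
  simp only [Finset.prod_const, Finset.card_univ, Fintype.card_fin, ← Real.exp_nat_mul,
    ← mul_assoc] at h
  exact h

lemma exists_periodization_eq_sum_exp [NeZero n] (hab : ∀ i, α i < β i) {l : ℤ} {φ : ℝ}
    (hφ : φ ∈ Set.Ioo (-(n : ℝ) / 2 + l) (-(n : ℝ) / 2 + l + 1)) :
    ∃ c : Fin n → ℂ, ∀ t,
      periodization (fun s ↦ recipGammaProd α β s * Complex.exp (s * (2 * π * I * φ))) t =
        ∑ k : Fin n, c k * Complex.exp (2 * π * I * ((l - (k : ℕ) : ℤ) : ℂ) * t) := by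
  have summable := (recipGammaProd.shiftSummable hab).mul_exp (w := 2 * π * I * φ) (by simp)
  obtain ⟨C, hC⟩ := summable.exists_norm_periodization_le
  refine exists_eq_sum_exp_of_periodic_of_norm_le summable.differentiable_periodization
    (periodization_periodic _) hφ (C := C) fun t ↦ (hC t).trans_eq ?_
  have im_eq : (2 * π * I * φ : ℂ).im = 2 * π * φ := by simp
  rw [← Real.exp_add, im_eq]
  ring_nf

lemma card_le_analyticOrderAt_prod {ι : Type*} {f : ι → ℂ → ℂ} {z : ℂ} {S : Finset ι}
    (hf : ∀ i ∈ S, AnalyticAt ℂ (f i) z) (hfz : ∀ i ∈ S, f i z = 0) :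
    (S.card : ℕ∞) ≤ analyticOrderAt (∏ i ∈ S, f i) z := by
  induction S using Finset.cons_induction with
  | empty => simp
  | cons i S hi ih =>
    rw [Finset.forall_mem_cons] at hf hfz
    rw [Finset.prod_cons, Finset.card_cons, Nat.cast_succ, add_comm,
      analyticOrderAt_mul hf.1 (S.analyticAt_prod hf.2)]
    exact add_le_add (Order.one_le_iff_ne_zero.2 (hf.1.analyticOrderAt_ne_zero.2 hfz.1))
      (ih hf.2 hfz.2)

lemma iteratedDeriv_recipGammaProd_mul_exp_eq_zero {a ν w : ℂ} {S : Finset (Fin n)} {r : ℕ}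
    (hr : r < S.card) (hS : ∀ i ∈ S, recipGammaPair (α i) (β i) (a + ν) = 0) :
    iteratedDeriv r (fun t ↦ recipGammaProd α β (a + t) * Complex.exp ((a + t) * w)) ν = 0 := by
  let f (i : Fin n) (t : ℂ) : ℂ := recipGammaPair (α i) (β i) (a + t)
  let g (t : ℂ) : ℂ := (∏ i ∈ Sᶜ, f i) t * Complex.exp ((a + t) * w)
  have f_analytic (i : Fin n) : AnalyticAt ℂ (f i) ν :=
    ((recipGammaPair.differentiable (α i) (β i)).comp (differentiable_id.const_add a)).analyticAt ν
  have prod_analytic (T : Finset (Fin n)) : AnalyticAt ℂ (∏ i ∈ T, f i) ν :=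
    T.analyticAt_prod fun i _ ↦ f_analytic i
  have g_analytic : AnalyticAt ℂ g ν := (prod_analytic Sᶜ).mul (by fun_prop)
  have factorization : (fun t ↦ recipGammaProd α β (a + t) * Complex.exp ((a + t) * w)) =
      (∏ i ∈ S, f i) * g := by
    funext t
    simp only [Pi.mul_apply, g, Finset.prod_apply, ← mul_assoc, Finset.prod_mul_prod_compl, f,
      recipGammaProd]
  have card_le : (S.card : ℕ∞) ≤ analyticOrderAt ((∏ i ∈ S, f i) * g) ν := by
    rw [analyticOrderAt_mul (prod_analytic S) g_analytic]
    exact le_add_right (card_le_analyticOrderAt_prod (fun i _ ↦ f_analytic i) hS)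
  rw [factorization]
  exact (natCast_le_analyticOrderAt_iff_iteratedDeriv_eq_zero
    ((prod_analytic S).mul g_analytic)).1 card_le r hr

lemma exists_nat_eq_add_of_exp_eq {x y : ℝ}
    (h : Complex.exp (2 * π * I * x) = Complex.exp (2 * π * I * y)) (hyx : y ≤ x) :
    ∃ k : ℕ, x = y + k := by
  obtain ⟨k, hk⟩ := Complex.exp_eq_exp_iff_exists_int.1 h
  have hxk : x = y + k := by
    have : (x : ℂ) = y + k := mul_left_cancel₀ Complex.two_pi_I_ne_zero (by rw [hk]; ring)
    exact_mod_cast this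
  have k_nonneg : (0 : ℝ) ≤ k := by linarith
  obtain ⟨k, rfl⟩ := Int.eq_ofNat_of_zero_le (Int.cast_nonneg_iff.1 k_nonneg)
  exact ⟨k, hxk⟩

lemma iteratedDeriv_recipGammaProd_eq_zero_of_lt {ν : ℝ} {r : ℕ}
    (hν : ∀ i, Complex.exp (2 * π * I * α i) = Complex.exp (2 * π * I * ν) → ν ≤ α i)
    (hr : r < Nat.card {i // Complex.exp (2 * π * I * α i) = Complex.exp (2 * π * I * ν)})
    (w : ℂ) {m : ℤ} (hm : m < 0) :
    iteratedDeriv r (fun t ↦ recipGammaProd α β (m + t) * Complex.exp ((m + t) * w)) ν = 0 := by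
  classical
  rw [Nat.card_eq_fintype_card, Fintype.card_subtype] at hr
  refine iteratedDeriv_recipGammaProd_mul_exp_eq_zero hr fun i hi ↦ ?_
  have hexp := (Finset.mem_filter.1 hi).2
  obtain ⟨k, hk⟩ := exists_nat_eq_add_of_exp_eq hexp (hν i hexp)
  obtain ⟨j, rfl⟩ := Int.eq_negSucc_of_lt_zero hm
  rw [← recipGammaPair.sub_succ_eq_zero (α i) (β i) (k + j), hk]
  push_cast [Int.negSucc_eq]
  ring_nf

lemma iteratedDeriv_recipGammaProd_eq_zero_of_gt {ν' : ℝ} {r : ℕ}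
    (hν' : ∀ i, Complex.exp (2 * π * I * β i) = Complex.exp (2 * π * I * ν') → β i ≤ ν')
    (hr : r < Nat.card {i // Complex.exp (2 * π * I * β i) = Complex.exp (2 * π * I * ν')})
    (w : ℂ) {m : ℤ} (hm : 0 < m) :
    iteratedDeriv r (fun t ↦ recipGammaProd α β (m + t) * Complex.exp ((m + t) * w)) ν' = 0 := by
  classical
  rw [Nat.card_eq_fintype_card, Fintype.card_subtype] at hr
  refine iteratedDeriv_recipGammaProd_mul_exp_eq_zero hr fun i hi ↦ ?_
  have hexp := (Finset.mem_filter.1 hi).2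
  obtain ⟨k, hk⟩ := exists_nat_eq_add_of_exp_eq hexp.symm (hν' i hexp)
  obtain ⟨j, rfl⟩ := Int.eq_succ_of_zero_lt hm
  rw [← recipGammaPair.add_succ_eq_zero (α i) (β i) (k + j), hk]
  push_cast
  ring_nf

end GammaProduct

section BoundaryValues

variable {κ : Type*} {f : ℂ → ℂ} {G : ℝ → ℝ} {e : κ → ℤ} {n : ℕ}

lemma iteratedDeriv_sum_exp (c : Fin n → ℂ) (m : Fin n → ℤ) (r : ℕ) (t : ℂ) :
    iteratedDeriv r (fun t ↦ ∑ k, c k * Complex.exp (2 * π * I * m k * t)) t =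
      (2 * π * I) ^ r * ∑ k, (m k : ℂ) ^ r * Complex.exp (2 * π * I * t) ^ m k * c k := by
  rw [iteratedDeriv_fun_sum fun k _ ↦ by fun_prop, Finset.mul_sum]
  refine Finset.sum_congr rfl fun k _ ↦ ?_
  rw [iteratedDeriv_const_mul_field, iteratedDeriv_cexp_const_mul, ← Complex.exp_int_mul, mul_pow,
    mul_left_comm (m k : ℂ), mul_right_comm]
  ring_nf

lemma tendsto_exponentSeries (hf : ShiftSummable f G) (he : Function.Injective e) {ν w : ℂ} {r : ℕ}
    (hw : w.re = 0) (vanish : ∀ m ∉ Set.range e,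
      iteratedDeriv r (fun t ↦ f (m + t) * Complex.exp ((m + t) * w)) ν = 0)
    {c : Fin n → ℂ} {m : Fin n → ℤ}
    (hc : ∀ t, periodization (fun s ↦ f s * Complex.exp (s * w)) t =
      ∑ k, c k * Complex.exp (2 * π * I * m k * t))
    {s : Set ℝ} (hs : ∀ u ∈ s, ∀ k, e k * u ≤ 0) :
    Tendsto (fun u : ℝ ↦ exponentSeries f e ν r (u + w)) (𝓝[s] 0)
      (𝓝 (∑ k, (m k : ℂ) ^ r * Complex.exp (2 * π * I * ν) ^ m k * c k)) := by
  have boundary_value : exponentSeries f e ν r w =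
      ∑ k, (m k : ℂ) ^ r * Complex.exp (2 * π * I * ν) ^ m k * c k := by
    rw [exponentSeries_eq_iteratedDeriv_periodization hf he hw vanish, funext hc,
      iteratedDeriv_sum_exp, inv_mul_cancel_left₀ (pow_ne_zero r Complex.two_pi_I_ne_zero)]
  have path : Tendsto (fun u : ℝ ↦ (u : ℂ) + w) (𝓝[s] 0) (𝓝[{w | ∀ k, e k * w.re ≤ 0}] w) := by
    refine tendsto_nhdsWithin_iff.2 ⟨?_, ?_⟩
    · simpa using ((Complex.continuous_ofReal.add_const w).tendsto 0).mono_left nhdsWithin_le_nhds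
    · filter_upwards [self_mem_nhdsWithin] with u hu k
      simpa [hw] using hs u hu k
  rw [← boundary_value]
  exact (continuousOn_exponentSeries hf he ν r w (by simp [hw])).tendsto.comp path

end BoundaryValues

section LinearAlgebra

open scoped Matrix

variable {J : Type*} {m : J → ℕ} {X : J → ℂ}

/-- The generalized Vandermonde matrix, with entry `(l - k) ^ r * X j ^ (l - k)` in row `(j, r)` and
column `k`. -/
def generalizedVandermonde (m : J → ℕ) (X : J → ℂ) (l : ℤ) (n : ℕ) :
    Matrix (Σ j, Fin (m j)) (Fin n) ℂ :=
  Matrix.of fun p k ↦ ((l - (k : ℕ) : ℤ) : ℂ) ^ (p.2 : ℕ) * X p.1 ^ (l - (k : ℕ) : ℤ)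

/-- The block-diagonal matrix of the monodromy around the base point of a local solution, whose
`j`-th block is `X j` times the lower triangular Pascal matrix. -/
def localMonodromy [DecidableEq J] (m : J → ℕ) (X : J → ℂ) :
    Matrix (Σ j, Fin (m j)) (Σ j, Fin (m j)) ℂ :=
  Matrix.blockDiagonal' fun j ↦ Matrix.of fun r r' : Fin (m j) ↦ ((r : ℕ).choose r' : ℂ) * X j

lemma localMonodromy_apply [DecidableEq J] (p q : Σ j, Fin (m j)) :
    localMonodromy m X p q = if p.1 = q.1 ∧ (q.2 : ℕ) ≤ p.2
      then ((p.2 : ℕ).choose q.2 : ℂ) * X p.1 else 0 := by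
  obtain ⟨j, r⟩ := p
  obtain ⟨j', r'⟩ := q
  rcases eq_or_ne j j' with rfl | hj
  · rcases le_or_gt (r' : ℕ) r with hr | hr
    · simp [localMonodromy, hr]
    · simp [localMonodromy, hr.not_ge, Nat.choose_eq_zero_of_lt hr]
  · simp [localMonodromy, hj, Matrix.blockDiagonal'_apply_ne]

section Fintype

variable [Fintype J] [DecidableEq J]

lemma localMonodromy_mulVec (g : J → ℕ → ℂ) (p : Σ j, Fin (m j)) :
    (localMonodromy m X *ᵥ fun q ↦ g q.1 q.2) p =
      ∑ i ∈ Finset.range ((p.2 : ℕ) + 1), ((p.2 : ℕ).choose i : ℂ) * X p.1 * g p.1 i := by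
  obtain ⟨j, r⟩ := p
  have off_diagonal (j' : J) (hj : j' ≠ j) (r' : Fin (m j')) :
      localMonodromy m X ⟨j, r⟩ ⟨j', r'⟩ = 0 := Matrix.blockDiagonal'_apply_ne _ _ _ hj.symm
  calc ∑ q : Σ j, Fin (m j), localMonodromy m X ⟨j, r⟩ q * g q.1 q.2
      = ∑ r' : Fin (m j), ((r : ℕ).choose r' : ℂ) * X j * g j r' := by
        rw [Fintype.sum_sigma, Fintype.sum_eq_single j fun j' hj ↦
          Finset.sum_eq_zero fun r' _ ↦ by rw [off_diagonal j' hj, zero_mul]]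
        simp [localMonodromy]
    _ = ∑ i ∈ Finset.range (m j), ((r : ℕ).choose i : ℂ) * X j * g j i :=
        Fin.sum_univ_eq_sum_range (fun i ↦ ((r : ℕ).choose i : ℂ) * X j * g j i) (m j)
    _ = _ := by
        refine (Finset.sum_subset (Finset.range_subset_range.2 r.2) fun i _ hi ↦ ?_).symm
        rw [Nat.choose_eq_zero_of_lt (by simpa using hi), Nat.cast_zero, zero_mul, zero_mul]

lemma isUnit_localMonodromy (hX : ∀ j, X j ≠ 0) : IsUnit (localMonodromy m X) := by
  let block (j : J) : Matrix (Fin (m j)) (Fin (m j)) ℂ :=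
    Matrix.of fun r r' ↦ ((r : ℕ).choose r' : ℂ) * X j
  have lower_triangular (j : J) : (block j).IsLowerTriangular := fun r r' h ↦ by
    simp [block, Nat.choose_eq_zero_of_lt (show (r : ℕ) < r' from h)]
  have isUnit_block : IsUnit block := Pi.isUnit_iff.2 fun j ↦ by
    rw [Matrix.isUnit_iff_isUnit_det, Matrix.det_of_isLowerTriangular _ (lower_triangular j)]
    simp [block, hX j]
  exact isUnit_block.map (Matrix.blockDiagonal'RingHom (fun j ↦ Fin (m j)) ℂ)

end Fintype

variable {ι κ μ : Type*} [Fintype κ] [DecidableEq κ]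

lemma mul_mul_mul_eq_one [DecidableEq ι] [Fintype μ] {V : Matrix ι κ ℂ} {W : Matrix κ ι ℂ}
    {V' : Matrix μ κ ℂ} {W' : Matrix κ μ ℂ} (h : V * W = 1) (h' : W' * V' = 1) :
    V * W' * (V' * W) = 1 := by
  rw [Matrix.mul_assoc, ← Matrix.mul_assoc W', h', Matrix.one_mul, h]

lemma mulVec_mulVec_eq_conj_mulVec [Fintype ι] {U : Matrix ι κ ℂ} {W : Matrix κ ι ℂ} (h : W * U = 1)
    (D : Matrix κ κ ℂ) (v : κ → ℂ) : U *ᵥ (D *ᵥ v) = (U * D * W) *ᵥ (U *ᵥ v) := by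
  rw [Matrix.mulVec_mulVec, Matrix.mulVec_mulVec, Matrix.mul_assoc (U * D), h, Matrix.mul_one]

end LinearAlgebra

section Hypergeometric

open scoped Matrix

variable {n : ℕ} {J : Type*}

/-- The local solutions at `0`, as a vector indexed by the pairs `(j, r)`. -/
def solutionsAtZero (α β : Fin n → ℝ) (ν : J → ℝ) (m : J → ℕ) (w : ℂ) (p : Σ j, Fin (m j)) : ℂ :=
  gA α β (ν p.1) p.2 w

/-- The local solutions at `∞`, as a vector indexed by the pairs `(j, r)`. -/
def solutionsAtInfinity (α β : Fin n → ℝ) (ν' : J → ℝ) (m : J → ℕ) (w : ℂ)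
    (p : Σ j, Fin (m j)) : ℂ :=
  gB α β (ν' p.1) p.2 w

variable [NeZero n] {α β : Fin n → ℝ}

lemma tendsto_gA (hab : ∀ i, α i < β i) {φ ν : ℝ} {r : ℕ}
    (hν : ∀ i, Complex.exp (2 * π * I * α i) = Complex.exp (2 * π * I * ν) → ν ≤ α i)
    (hr : r < Nat.card {i // Complex.exp (2 * π * I * α i) = Complex.exp (2 * π * I * ν)})
    {N : ℕ} {c : Fin N → ℂ} {m : Fin N → ℤ}
    (hc : ∀ t, periodization (fun s ↦ recipGammaProd α β s * Complex.exp (s * (2 * π * I * φ))) t =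
      ∑ k, c k * Complex.exp (2 * π * I * m k * t)) :
    Tendsto (fun u : ℝ ↦ gA α β ν r (u + 2 * π * I * φ)) (𝓝[<] 0)
      (𝓝 (∑ k, (m k : ℂ) ^ r * Complex.exp (2 * π * I * ν) ^ m k * c k)) := by
  simp only [gA_eq_exponentSeries]
  refine tendsto_exponentSeries (recipGammaProd.shiftSummable hab) Nat.cast_injective (by simp)
    (fun j hj ↦ iteratedDeriv_recipGammaProd_eq_zero_of_lt hν hr _ ?_) hc fun u hu k ↦ ?_
  · exact not_le.1 fun hj₀ ↦ hj (Int.eq_ofNat_of_zero_le hj₀ |>.imp fun _ h ↦ h.symm)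
  · exact mul_nonpos_of_nonneg_of_nonpos (by simp) (le_of_lt hu)

lemma tendsto_gB (hab : ∀ i, α i < β i) {φ ν' : ℝ} {r : ℕ}
    (hν' : ∀ i, Complex.exp (2 * π * I * β i) = Complex.exp (2 * π * I * ν') → β i ≤ ν')
    (hr : r < Nat.card {i // Complex.exp (2 * π * I * β i) = Complex.exp (2 * π * I * ν')})
    {N : ℕ} {c : Fin N → ℂ} {m : Fin N → ℤ}
    (hc : ∀ t, periodization (fun s ↦ recipGammaProd α β s * Complex.exp (s * (2 * π * I * φ))) t =
      ∑ k, c k * Complex.exp (2 * π * I * m k * t)) :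
    Tendsto (fun u : ℝ ↦ gB α β ν' r (u + 2 * π * I * φ)) (𝓝[>] 0)
      (𝓝 (∑ k, (m k : ℂ) ^ r * Complex.exp (2 * π * I * ν') ^ m k * c k)) := by
  simp only [gB_eq_exponentSeries]
  refine tendsto_exponentSeries (recipGammaProd.shiftSummable hab)
    (neg_injective.comp Nat.cast_injective) (by simp)
    (fun j hj ↦ iteratedDeriv_recipGammaProd_eq_zero_of_gt hν' hr _ ?_) hc fun u hu k ↦ ?_
  · exact not_le.1 fun hj₀ ↦ hj (Int.exists_eq_neg_ofNat hj₀ |>.imp fun _ h ↦ h.symm)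
  · exact mul_nonpos_of_nonpos_of_nonneg (by simp) (le_of_lt hu)

lemma tendsto_gB_of_tendsto_gA [Fintype J] {K : Type*} (hab : ∀ i, α i < β i) {ν : J → ℝ}
    (hν : ∀ j i, Complex.exp (2 * π * I * α i) = Complex.exp (2 * π * I * ν j) → ν j ≤ α i)
    {m : J → ℕ}
    (hm : ∀ j, m j ≤ Nat.card {i // Complex.exp (2 * π * I * α i) = Complex.exp (2 * π * I * ν j)})
    {ν' : K → ℝ}
    (hν' : ∀ j i, Complex.exp (2 * π * I * β i) = Complex.exp (2 * π * I * ν' j) → β i ≤ ν' j)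
    {m' : K → ℕ}
    (hm' : ∀ j, m' j ≤
      Nat.card {i // Complex.exp (2 * π * I * β i) = Complex.exp (2 * π * I * ν' j)})
    {l : ℤ} {W : Matrix (Fin n) (Σ j, Fin (m j)) ℂ}
    (hW : W * generalizedVandermonde m (fun j ↦ Complex.exp (2 * π * I * ν j)) l n = 1)
    {φ : ℝ} (hφ : φ ∈ Set.Ioo (-(n : ℝ) / 2 + l) (-(n : ℝ) / 2 + l + 1))
    {b : (Σ j, Fin (m j)) → ℂ}
    (hb : ∀ q : Σ j, Fin (m j),
      Tendsto (fun u : ℝ ↦ gA α β (ν q.1) q.2 (u + 2 * π * I * φ)) (𝓝[<] 0) (𝓝 (b q)))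
    (p : Σ j, Fin (m' j)) :
    Tendsto (fun u : ℝ ↦ gB α β (ν' p.1) p.2 (u + 2 * π * I * φ)) (𝓝[>] 0) (𝓝
      (((generalizedVandermonde m' (fun j ↦ Complex.exp (2 * π * I * ν' j)) l n * W) *ᵥ b) p)) := by
  obtain ⟨c, hc⟩ := exists_periodization_eq_sum_exp hab hφ
  have b_eq : b = generalizedVandermonde m (fun j ↦ Complex.exp (2 * π * I * ν j)) l n *ᵥ c :=
    funext fun q ↦ tendsto_nhds_unique (hb q)
      (tendsto_gA hab (hν q.1) (q.2.2.trans_le (hm q.1)) hc)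
  rw [b_eq, Matrix.mulVec_mulVec, Matrix.mul_assoc, hW, Matrix.mul_one]
  exact tendsto_gB hab (hν' p.1) (p.2.2.trans_le (hm' p.1)) hc

lemma gA_add_two_pi_I (hab : ∀ i, α i < β i) (ν : ℝ) (r : ℕ) {w : ℂ} (hw : w.re ≤ 0) :
    gA α β ν r (w + 2 * π * I) = ∑ i ∈ Finset.range (r + 1),
      (r.choose i : ℂ) * Complex.exp (2 * π * I * ν) * gA α β ν i w := by
  simp only [gA_eq_exponentSeries]
  exact exponentSeries_add_two_pi_I (recipGammaProd.shiftSummable hab) Nat.cast_injective ν r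
    fun k ↦ mul_nonpos_of_nonneg_of_nonpos (by simp) hw

lemma gB_add_two_pi_I (hab : ∀ i, α i < β i) (ν' : ℝ) (r : ℕ) {w : ℂ} (hw : 0 ≤ w.re) :
    gB α β ν' r (w + 2 * π * I) = ∑ i ∈ Finset.range (r + 1),
      (r.choose i : ℂ) * Complex.exp (2 * π * I * ν') * gB α β ν' i w := by
  simp only [gB_eq_exponentSeries]
  exact exponentSeries_add_two_pi_I (recipGammaProd.shiftSummable hab)
    (neg_injective.comp Nat.cast_injective) ν' r
    fun k ↦ mul_nonpos_of_nonpos_of_nonneg (by simp) hw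

variable [Fintype J] [DecidableEq J] {m : J → ℕ}

lemma solutionsAtZero_add_two_pi_I (hab : ∀ i, α i < β i) (ν : J → ℝ) {w : ℂ} (hw : w.re ≤ 0) :
    solutionsAtZero α β ν m (w + 2 * π * I) =
      localMonodromy m (fun j ↦ Complex.exp (2 * π * I * ν j)) *ᵥ solutionsAtZero α β ν m w := by
  funext p
  have mulVec_eq := localMonodromy_mulVec (X := fun j ↦ Complex.exp (2 * π * I * ν j))
    (fun j i ↦ gA α β (ν j) i w) p
  exact (gA_add_two_pi_I hab (ν p.1) p.2 hw).trans mulVec_eq.symm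

lemma solutionsAtInfinity_add_two_pi_I (hab : ∀ i, α i < β i) (ν' : J → ℝ) {w : ℂ}
    (hw : 0 ≤ w.re) :
    solutionsAtInfinity α β ν' m (w + 2 * π * I) =
      localMonodromy m (fun j ↦ Complex.exp (2 * π * I * ν' j)) *ᵥ
        solutionsAtInfinity α β ν' m w := by
  funext p
  have mulVec_eq := localMonodromy_mulVec (X := fun j ↦ Complex.exp (2 * π * I * ν' j))
    (fun j i ↦ gB α β (ν' j) i w) p
  exact (gB_add_two_pi_I hab (ν' p.1) p.2 hw).trans mulVec_eq.symm

lemma solutionsAtInfinity_sub_two_pi_I (hab : ∀ i, α i < β i) (ν' : J → ℝ) {w : ℂ}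
    (hw : 0 ≤ w.re) :
    solutionsAtInfinity α β ν' m (w - 2 * π * I) =
      (localMonodromy m fun j ↦ Complex.exp (2 * π * I * ν' j))⁻¹ *ᵥ
        solutionsAtInfinity α β ν' m w := by
  have forward := solutionsAtInfinity_add_two_pi_I (m := m) (w := w - 2 * π * I) hab ν'
    (by simpa using hw)
  rw [sub_add_cancel] at forward
  have hD := isUnit_localMonodromy (m := m) fun j ↦ Complex.exp_ne_zero (2 * π * I * ν' j)
  rw [forward, Matrix.mulVec_mulVec,
    Matrix.nonsing_inv_mul _ ((Matrix.isUnit_iff_isUnit_det _).1 hD), Matrix.one_mulVec]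

end Hypergeometric

open scoped Matrix in
theorem hypergeometric_monodromy_general {n : ℕ} [NeZero n] {α β : Fin n → ℝ}
    (hab : ∀ i, α i < β i)
    {JA JB : Type*} [Fintype JA] [DecidableEq JA] [Fintype JB] [DecidableEq JB]
    {A : JA → ℂ} {mA : JA → ℕ}
    (hmA : ∀ j, mA j = Nat.card {i // Complex.exp (2 * π * I * α i) = A j})
    {ν : JA → ℝ} (hν₁ : ∀ j, ∃ i, α i = ν j ∧ Complex.exp (2 * π * I * α i) = A j)
    (hν₂ : ∀ j i, Complex.exp (2 * π * I * α i) = A j → ν j ≤ α i)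
    {B : JB → ℂ} {mB : JB → ℕ}
    (hmB : ∀ j, mB j = Nat.card {i // Complex.exp (2 * π * I * β i) = B j})
    {ν' : JB → ℝ} (hν'₁ : ∀ j, ∃ i, β i = ν' j ∧ Complex.exp (2 * π * I * β i) = B j)
    (hν'₂ : ∀ j i, Complex.exp (2 * π * I * β i) = B j → β i ≤ ν' j)
    {l : ℤ} {VA : Matrix (Σ j, Fin (mA j)) (Fin n) ℂ}
    (hVA : ∀ p k, VA p k = ((l - (k : ℕ) : ℤ) : ℂ) ^ (p.2 : ℕ) * A p.1 ^ (l - (k : ℕ) : ℤ))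
    {VB : Matrix (Σ j, Fin (mB j)) (Fin n) ℂ}
    (hVB : ∀ p k, VB p k = ((l - (k : ℕ) : ℤ) : ℂ) ^ (p.2 : ℕ) * B p.1 ^ (l - (k : ℕ) : ℤ))
    {WA : Matrix (Fin n) (Σ j, Fin (mA j)) ℂ} (hWA₁ : VA * WA = 1) (hWA₂ : WA * VA = 1)
    {WB : Matrix (Fin n) (Σ j, Fin (mB j)) ℂ} (hWB₁ : VB * WB = 1) (hWB₂ : WB * VB = 1)
    {DA : Matrix (Σ j, Fin (mA j)) (Σ j, Fin (mA j)) ℂ}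
    (hDA : ∀ p q, DA p q = if p.1 = q.1 ∧ (q.2 : ℕ) ≤ (p.2 : ℕ)
      then (Nat.choose (p.2 : ℕ) (q.2 : ℕ) : ℂ) * A p.1 else 0)
    {DB : Matrix (Σ j, Fin (mB j)) (Σ j, Fin (mB j)) ℂ}
    (hDB : ∀ p q, DB p q = if p.1 = q.1 ∧ (q.2 : ℕ) ≤ (p.2 : ℕ)
      then (Nat.choose (p.2 : ℕ) (q.2 : ℕ) : ℂ) * B p.1 else 0)
    {bA : (Σ j, Fin (mA j)) → ℝ → ℂ}
    (hbA : ∀ (q : Σ j, Fin (mA j)) (φ : ℝ),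
      Tendsto (fun u : ℝ ↦ gA α β (ν q.1) q.2 (u + 2 * π * I * φ)) (𝓝[<] 0) (𝓝 (bA q φ)))
    {GA : (Σ j, Fin (mA j)) → ℂ → ℂ}
    (hGA : ∀ p w, GA p w = ∑ q : Σ j, Fin (mB j), (VA * WB) p q * gB α β (ν' q.1) q.2 w)
    {GB : (Σ j, Fin (mB j)) → ℂ → ℂ}
    (hGB : ∀ p w, GB p w = ∑ q : Σ j, Fin (mA j), (VB * WA) p q * gA α β (ν q.1) q.2 w) :
    (∀ p, ∀ φ ∈ Set.Ioo (-(n : ℝ) / 2 + (l : ℝ)) (-(n : ℝ) / 2 + (l : ℝ) + 1),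
      Tendsto (fun u : ℝ ↦ gB α β (ν' p.1) p.2 (u + 2 * π * I * φ)) (𝓝[>] 0)
        (𝓝 (∑ q, (VB * WA) p q * bA q φ))) ∧
    (∀ p w, 0 < w.re →
      GA p (w - 2 * π * I) = ∑ q, (VA * WB * DB⁻¹ * VB * WA) p q * GA q w) ∧
    (∀ p w, w.re < 0 →
      GB p (w + 2 * π * I) = ∑ q, (VB * WA * DA * VA * WB) p q * GB q w) := by
  obtain rfl : A = fun j ↦ Complex.exp (2 * π * I * ν j) := funext fun j ↦ by
    obtain ⟨i, hi, hiA⟩ := hν₁ j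
    rw [← hiA, hi]
  obtain rfl : B = fun j ↦ Complex.exp (2 * π * I * ν' j) := funext fun j ↦ by
    obtain ⟨i, hi, hiB⟩ := hν'₁ j
    rw [← hiB, hi]
  replace hVA : VA = generalizedVandermonde mA (fun j ↦ Complex.exp (2 * π * I * ν j)) l n :=
    Matrix.ext hVA
  replace hVB : VB = generalizedVandermonde mB (fun j ↦ Complex.exp (2 * π * I * ν' j)) l n :=
    Matrix.ext hVB
  replace hDA : DA = localMonodromy mA fun j ↦ Complex.exp (2 * π * I * ν j) :=
    Matrix.ext fun p q ↦ by rw [hDA, localMonodromy_apply]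
  replace hDB : DB = localMonodromy mB fun j ↦ Complex.exp (2 * π * I * ν' j) :=
    Matrix.ext fun p q ↦ by rw [hDB, localMonodromy_apply]
  have GA_eq (w : ℂ) : (GA · w) = (VA * WB) *ᵥ solutionsAtInfinity α β ν' mB w := funext (hGA · w)
  have GB_eq (w : ℂ) : (GB · w) = (VB * WA) *ᵥ solutionsAtZero α β ν mA w := funext (hGB · w)
  refine ⟨fun p φ hφ ↦ ?_, fun p w hw ↦ ?_, fun p w hw ↦ ?_⟩
  · subst hVA hVB
    exact tendsto_gB_of_tendsto_gA hab hν₂ (fun j ↦ (hmA j).le) hν'₂ (fun j ↦ (hmB j).le) hWA₂ hφ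
      (hbA · φ) p
  · suffices h : (GA · (w - 2 * π * I)) = (VA * WB * DB⁻¹ * VB * WA) *ᵥ (GA · w) from congrFun h p
    rw [GA_eq, GA_eq, solutionsAtInfinity_sub_two_pi_I hab ν' hw.le, ← hDB,
      mulVec_mulVec_eq_conj_mulVec (mul_mul_mul_eq_one hWB₁ hWA₂), ← Matrix.mul_assoc]
  · suffices h : (GB · (w + 2 * π * I)) = (VB * WA * DA * VA * WB) *ᵥ (GB · w) from congrFun h p
    rw [GB_eq, GB_eq, solutionsAtZero_add_two_pi_I hab ν hw.le, ← hDA,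
      mulVec_mulVec_eq_conj_mulVec (mul_mul_mul_eq_one hWA₁ hWB₂), ← Matrix.mul_assoc]

/-- **connection formula and hypergeometric monodromy.**
With `β > α` componentwise, `α - β` non-resonant mod `ℤ`, `A`-data and `B`-data the distinct
exponent values at `0` and `∞` with their multiplicities, `V_A = V_{A,m_A,l}`,
`V_B = V_{B,m_B,l}` the generalized Vandermonde matrices at a fixed `l ∈ ℤ` (with two-sided
inverses `W_A = V_A⁻¹`, `W_B = V_B⁻¹`), `D_A`, `D_B` the block-diagonal matrices, and
`b_A q φ` the boundary values from inside of the local solutions at `0`: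
(i) the connection formula: for `φ ∈ (-n/2+l, -n/2+l+1)` the boundary value from outside of
`S_{B_j,r}` exists and equals `Σ_q (V_B V_A⁻¹)_{p,q} b_A(q,φ)`;
(ii) the continuations `G_A p = Σ_q (V_A V_B⁻¹)_{p,q} g_{B,q}` of the solutions at `0` to the
outside satisfy, under the loop `w ↦ w - 2πi` around `∞`,
`G_A(w - 2πi) = (V_A V_B⁻¹ D_B⁻¹ V_B V_A⁻¹) G_A(w)` — i.e. in the basis of local solutions
at `0` the monodromy around `∞` is `(V_A V_B⁻¹ D_B⁻¹ V_B V_A⁻¹)^t`;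
(iii) the continuations `G_B p = Σ_q (V_B V_A⁻¹)_{p,q} g_{A,q}` of the solutions at `∞` to the
inside satisfy, under the loop `w ↦ w + 2πi` around `0`,
`G_B(w + 2πi) = (V_B V_A⁻¹ D_A V_A V_B⁻¹) G_B(w)` — i.e. in the basis of local solutions at
`∞` the monodromy around `0` is `(V_B V_A⁻¹ D_A V_A V_B⁻¹)^t`. -/
theorem hypergeometric_monodromy (n : ℕ) (hn : 1 ≤ n) (α β : Fin n → ℝ)
    (hab : ∀ i, α i < β i)
    (hres : ∀ i i' : Fin n, ∀ k : ℤ, α i - β i' ≠ (k : ℝ))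
    (H : ℝ → ℂ)
    (hH : H = convList (List.ofFn fun i => hfun ((α i : ℂ)) ((β i : ℂ))))
    -- the distinct exponent values at 0 and their multiplicities
    (nA : ℕ) (A : Fin nA → ℂ) (hAinj : Function.Injective A)
    (hAval : ∀ j, ∃ i, Complex.exp (2 * (π : ℂ) * Complex.I * (α i : ℂ)) = A j)
    (hAsurj : ∀ i, ∃ j, Complex.exp (2 * (π : ℂ) * Complex.I * (α i : ℂ)) = A j)
    (mA : Fin nA → ℕ)
    (hmA : ∀ j, mA j =
      Nat.card {i : Fin n // Complex.exp (2 * (π : ℂ) * Complex.I * (α i : ℂ)) = A j})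
    (hnA : ∑ j, mA j = n)
    (ν : Fin nA → ℝ)
    (hν₁ : ∀ j, ∃ i, α i = ν j ∧ Complex.exp (2 * (π : ℂ) * Complex.I * (α i : ℂ)) = A j)
    (hν₂ : ∀ j i, Complex.exp (2 * (π : ℂ) * Complex.I * (α i : ℂ)) = A j → ν j ≤ α i)
    -- the distinct exponent values at ∞ and their multiplicities
    (nB : ℕ) (B : Fin nB → ℂ) (hBinj : Function.Injective B)
    (hBval : ∀ j, ∃ i, Complex.exp (2 * (π : ℂ) * Complex.I * (β i : ℂ)) = B j)
    (hBsurj : ∀ i, ∃ j, Complex.exp (2 * (π : ℂ) * Complex.I * (β i : ℂ)) = B j)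
    (mB : Fin nB → ℕ)
    (hmB : ∀ j, mB j =
      Nat.card {i : Fin n // Complex.exp (2 * (π : ℂ) * Complex.I * (β i : ℂ)) = B j})
    (hnB : ∑ j, mB j = n)
    (ν' : Fin nB → ℝ)
    (hν'₁ : ∀ j, ∃ i, β i = ν' j ∧ Complex.exp (2 * (π : ℂ) * Complex.I * (β i : ℂ)) = B j)
    (hν'₂ : ∀ j i, Complex.exp (2 * (π : ℂ) * Complex.I * (β i : ℂ)) = B j → β i ≤ ν' j)
    -- the generalized Vandermonde matrices at a fixed l, with their inverses
    (l : ℤ)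
    (VA : Matrix (Σ j : Fin nA, Fin (mA j)) (Fin n) ℂ)
    (hVA : ∀ (p : Σ j : Fin nA, Fin (mA j)) (k : Fin n),
      VA p k = ((l - (k : ℕ) : ℤ) : ℂ) ^ (p.2 : ℕ) * A p.1 ^ (l - (k : ℕ) : ℤ))
    (VB : Matrix (Σ j : Fin nB, Fin (mB j)) (Fin n) ℂ)
    (hVB : ∀ (p : Σ j : Fin nB, Fin (mB j)) (k : Fin n),
      VB p k = ((l - (k : ℕ) : ℤ) : ℂ) ^ (p.2 : ℕ) * B p.1 ^ (l - (k : ℕ) : ℤ))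
    (WA : Matrix (Fin n) (Σ j : Fin nA, Fin (mA j)) ℂ)
    (hWA₁ : VA * WA = 1) (hWA₂ : WA * VA = 1)
    (WB : Matrix (Fin n) (Σ j : Fin nB, Fin (mB j)) ℂ)
    (hWB₁ : VB * WB = 1) (hWB₂ : WB * VB = 1)
    -- the block-diagonal matrices
    (DA : Matrix (Σ j : Fin nA, Fin (mA j)) (Σ j : Fin nA, Fin (mA j)) ℂ)
    (hDA : ∀ p q : Σ j : Fin nA, Fin (mA j),
      DA p q = if p.1 = q.1 ∧ (q.2 : ℕ) ≤ (p.2 : ℕ)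
        then (Nat.choose (p.2 : ℕ) (q.2 : ℕ) : ℂ) * A p.1 else 0)
    (DB : Matrix (Σ j : Fin nB, Fin (mB j)) (Σ j : Fin nB, Fin (mB j)) ℂ)
    (hDB : ∀ p q : Σ j : Fin nB, Fin (mB j),
      DB p q = if p.1 = q.1 ∧ (q.2 : ℕ) ≤ (p.2 : ℕ)
        then (Nat.choose (p.2 : ℕ) (q.2 : ℕ) : ℂ) * B p.1 else 0)
    -- the boundary values from inside of the local solutions at 0
    (bA : (Σ j : Fin nA, Fin (mA j)) → ℝ → ℂ)
    (hbA : ∀ (q : Σ j : Fin nA, Fin (mA j)) (φ : ℝ),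
      Tendsto (fun u : ℝ => gA α β (ν q.1) (q.2 : ℕ)
          ((u : ℂ) + 2 * (π : ℂ) * Complex.I * (φ : ℂ)))
        (𝓝[<] 0) (𝓝 (bA q φ)))
    -- the analytic continuations of the solutions at 0 to the outside and vice versa
    (GA : (Σ j : Fin nA, Fin (mA j)) → ℂ → ℂ)
    (hGA : ∀ p w, GA p w =
      ∑ q : Σ j : Fin nB, Fin (mB j), (VA * WB) p q * gB α β (ν' q.1) (q.2 : ℕ) w)
    (GB : (Σ j : Fin nB, Fin (mB j)) → ℂ → ℂ)
    (hGB : ∀ p w, GB p w =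
      ∑ q : Σ j : Fin nA, Fin (mA j), (VB * WA) p q * gA α β (ν q.1) (q.2 : ℕ) w) :
    -- (i) the connection formula on the sector arg z/2π ∈ (-n/2+l, -n/2+l+1)
    (∀ p : Σ j : Fin nB, Fin (mB j),
      ∀ φ ∈ Set.Ioo (-(n : ℝ) / 2 + (l : ℝ)) (-(n : ℝ) / 2 + (l : ℝ) + 1),
        Tendsto (fun u : ℝ => gB α β (ν' p.1) (p.2 : ℕ)
            ((u : ℂ) + 2 * (π : ℂ) * Complex.I * (φ : ℂ)))
          (𝓝[>] 0)
          (𝓝 (∑ q : Σ j : Fin nA, Fin (mA j), (VB * WA) p q * bA q φ))) ∧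
    -- (ii) monodromy around ∞ in the basis of local solutions at 0
    (∀ p : Σ j : Fin nA, Fin (mA j), ∀ w : ℂ, 0 < w.re →
      GA p (w - 2 * (π : ℂ) * Complex.I) =
        ∑ q : Σ j : Fin nA, Fin (mA j), (VA * WB * DB⁻¹ * VB * WA) p q * GA q w) ∧
    -- (iii) monodromy around 0 in the basis of local solutions at ∞
    (∀ p : Σ j : Fin nB, Fin (mB j), ∀ w : ℂ, w.re < 0 →
      GB p (w + 2 * (π : ℂ) * Complex.I) =
        ∑ q : Σ j : Fin nB, Fin (mB j), (VB * WA * DA * VA * WB) p q * GB q w) :=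
  have : NeZero n := .of_pos hn
  hypergeometric_monodromy_general hab hmA hν₁ hν₂ hmB hν'₁ hν'₂ hVA hVB hWA₁ hWA₂ hWB₁ hWB₂ hDA hDB
    hbA hGA hGB
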